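/- arXiv:2103.03152 — 8 statements merged into one kernel-verified Lean document; each statement's English description precedes it below -/
import Mathlib

section
/- Let A be a commutative ring and let X, Y be additive subgroups of A such that xy = 0 for all x ∈ X and y ∈ Y. Then for every n ≥ 0, every k with 0 ≤ k ≤ n, all derivations D_1, …, D_k of A, all elements x_1, …, x_{n+1} ∈ X, and every y ∈ Y, one has x_1 ⋯ x_{n+1} · D_1(D_2(⋯ D_k(y) ⋯)) = 0. -/
/-!
Let `J` be the ideal generated by `X`. A derivation maps `J ^ (m + 1)` into `J ^ m`
(`derivation_mem_pow`). By induction on `k`, the ideal `J ^ (k + 1)` annihilates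
`z = D₁(⋯D_k(y)⋯)` (`mul_applyChain_eq_zero`): for `a ∈ J` and `b ∈ J ^ (k + 1)`, applying a
further derivation `D` to `b * z = 0` gives `a * b * D z = -(a * D b) * z`, which vanishes because
`a * D b ∈ J ^ (k + 1)`. The product of `n + 1 ≥ k + 1` elements of `X` lies in `J ^ (k + 1)`.
-/

/-- Iterated application of a list of derivations: `applyChain [D₁, …, D_k] y = D₁(D₂(⋯D_k(y)⋯))`. -/
def applyChain {A : Type*} [CommRing A] : List (Derivation ℤ A A) → A → A
  | [], y => y
  | D :: l, y => D (applyChain l y)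

theorem derivation_mem_pow {A : Type*} [CommRing A] (J : Ideal A) (D : Derivation ℤ A A) (m : ℕ) :
    ∀ w ∈ J ^ (m + 1), D w ∈ J ^ m := by
  induction m with
  | zero => intro w _; simp
  | succ m ih =>
    intro w hw
    rw [pow_succ'] at hw
    refine Submodule.mul_induction_on hw (fun a ha b hb => ?_) (fun u v hu hv => ?_)
    · rw [D.leibniz, smul_eq_mul, smul_eq_mul]
      refine add_mem ?_ (Ideal.mul_mem_right _ _ hb)
      rw [pow_succ']
      exact Ideal.mul_mem_mul ha (ih b hb)
    · rw [map_add]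
      exact add_mem hu hv

theorem mul_applyChain_eq_zero {A : Type*} [CommRing A] (J : Ideal A) (y : A)
    (h : ∀ w ∈ J, w * y = 0) (l : List (Derivation ℤ A A)) :
    ∀ w ∈ J ^ (l.length + 1), w * applyChain l y = 0 := by
  induction l with
  | nil => simpa [applyChain] using h
  | cons D l ih =>
    intro w hw
    rw [List.length_cons, pow_succ'] at hw
    refine Submodule.mul_induction_on hw (fun a ha b hb => ?_) (fun u v hu hv => ?_)
    · have hD : D (b * applyChain l y) = 0 := by rw [ih b hb, map_zero]
      rw [D.leibniz, smul_eq_mul, smul_eq_mul] at hD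
      have hab : a * D b ∈ J ^ (l.length + 1) := by
        rw [pow_succ']
        exact Ideal.mul_mem_mul ha (derivation_mem_pow J D _ b hb)
      have hz := ih _ hab
      simp only [applyChain]
      linear_combination a * hD - hz
    · rw [add_mul, hu, hv, add_zero]

/-- Let `X`, `Y` be additive subgroups of a commutative ring `A` with `xy = 0` for all
`x ∈ X`, `y ∈ Y`.  Then for all `n`, all `k ≤ n`, all derivations `D₁, …, D_k` of `A`,
all `x₁, …, x_{n+1} ∈ X` and all `y ∈ Y`, we have
`x₁ ⋯ x_{n+1} · D₁(D₂(⋯D_k(y)⋯)) = 0`. -/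
theorem prod_mul_applyChain_eq_zero {A : Type*} [CommRing A] (X Y : AddSubgroup A)
    (h : ∀ x ∈ X, ∀ y ∈ Y, x * y = 0) (n k : ℕ) (hk : k ≤ n)
    (D : Fin k → Derivation ℤ A A) (x : Fin (n + 1) → A) (hx : ∀ i, x i ∈ X)
    (y : A) (hy : y ∈ Y) :
    (∏ i, x i) * applyChain (List.ofFn D) y = 0 := by
  have hJ : ∀ w ∈ Ideal.span (X : Set A), w * y = 0 := by
    intro w hw
    induction hw using Submodule.span_induction with
    | mem u hu => exact h u hu y hy
    | zero => exact zero_mul y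
    | add u v _ _ hu hv => rw [add_mul, hu, hv, add_zero]
    | smul c u _ hu => rw [smul_eq_mul, mul_assoc, hu, mul_zero]
  refine mul_applyChain_eq_zero _ y hJ _ _ ?_
  rw [List.length_ofFn]
  refine Ideal.pow_le_pow_right (Nat.succ_le_succ hk) ?_
  have hp := Ideal.prod_mem_prod (s := Finset.univ) (I := fun _ => Ideal.span (X : Set A))
    (x := x) (fun i _ => Ideal.subset_span (hx i))
  simpa using hp
end

section
/- Let X and Y be k-subspaces of A with XY = 0, and suppose that the g-submodule of A generated by Y equals U_{≤n}·Y for some n ≥ 0. Then ⟨X^{n+1}⟩ · ⟨Y⟩ = 0, where ⟨Z⟩ denotes the g-submodule of A generated by Z. -/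
/-!
For a derivation `D`, the Leibniz rule gives `D (X ^ (m + 1)) ⊆ X ^ m * A`. By induction on `m`
this shows that `X ^ (m + 1)` kills `U_{≤m}·Y`: for `w ∈ X ^ (m + 2)` and `v ∈ U_{≤m}·Y`, one has
`w * v = 0`, hence `w * D v = -(v * D w)`, and the right-hand side vanishes because
`D w ∈ X ^ (m + 1) * A`. Thus `X ^ (n + 1)` annihilates `⟨Y⟩ = U_{≤n}·Y`. Since `⟨Y⟩` is
`g`-stable, so is its annihilator, which therefore contains all of `⟨X ^ (n + 1)⟩`.
-/

section

variable {k : Type*} [Field k] {g : Type*} [LieRing g] [LieAlgebra k g]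
  {A : Type*} [CommRing A] [Algebra k A]

/-- `Ule ρ V n` is `U_{≤n}·V`: the span of all `ρ(x₁)(ρ(x₂)(⋯ρ(x_j)(v)⋯))` with
`0 ≤ j ≤ n`, `xᵢ ∈ g`, `v ∈ V`. -/
def Ule (ρ : g →ₗ⁅k⁆ Derivation k A A) (V : Submodule k A) : ℕ → Submodule k A
  | 0 => V
  | n + 1 => Ule ρ V n ⊔ Submodule.span k {a : A | ∃ x : g, ∃ v ∈ Ule ρ V n, ρ x v = a}

/-- The `g`-submodule of `A` generated by a subspace `Z`: the smallest subspace of `A`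
containing `Z` that is stable under `ρ(x)` for all `x ∈ g`. -/
def gSpan (ρ : g →ₗ⁅k⁆ Derivation k A A) (Z : Submodule k A) : Submodule k A :=
  sInf {W : Submodule k A | Z ≤ W ∧ ∀ x : g, ∀ a ∈ W, ρ x a ∈ W}

/-- A derivation lowers the `X`-adic order by at most one. -/
theorem derivation_pow_succ_mem (D : Derivation k A A) (X : Submodule k A) (m : ℕ) :
    ∀ w ∈ X ^ (m + 1), D w ∈ X ^ m * (⊤ : Submodule k A) := by
  induction m with
  | zero =>
    intro w _
    rw [pow_zero, one_mul]
    trivial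
  | succ m ih =>
    intro w hw
    rw [pow_succ] at hw
    refine Submodule.mul_induction_on hw (fun a ha x hx => ?_) (fun a b ha hb => ?_)
    · rw [Derivation.leibniz, smul_eq_mul, smul_eq_mul]
      refine add_mem (Submodule.mul_mem_mul ha trivial) ?_
      have h : x * D a ∈ X * (X ^ m * (⊤ : Submodule k A)) := Submodule.mul_mem_mul hx (ih a ha)
      rwa [← mul_assoc, ← pow_succ'] at h
    · rw [map_add]
      exact add_mem ha hb

/-- If every element of `P` kills `v`, so does every element of `P * A`. -/
theorem mul_eq_zero_of_mem_mul_top {P : Submodule k A} {v : A} (h : ∀ p ∈ P, p * v = 0)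
    {w : A} (hw : w ∈ P * (⊤ : Submodule k A)) : w * v = 0 := by
  refine Submodule.mul_induction_on hw (fun p hp a _ => ?_) (fun a b ha hb => ?_)
  · rw [mul_right_comm, h p hp, zero_mul]
  · rw [add_mul, ha, hb, add_zero]

theorem pow_succ_mul_Ule_eq_zero (ρ : g →ₗ⁅k⁆ Derivation k A A) (X Y : Submodule k A)
    (hXY : X * Y = ⊥) (m : ℕ) : ∀ v ∈ Ule ρ Y m, ∀ w ∈ X ^ (m + 1), w * v = 0 := by
  induction m with
  | zero =>
    intro v hv w hw
    rw [zero_add, pow_one] at hw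
    have h : w * v ∈ X * Y := Submodule.mul_mem_mul hw hv
    rwa [hXY, Submodule.mem_bot] at h
  | succ m ih =>
    have key : ∀ v ∈ Ule ρ Y m, ∀ w ∈ X ^ (m + 1 + 1), w * v = 0 := fun v hv w hw => by
      refine mul_eq_zero_of_mem_mul_top (ih v hv) ?_
      rw [pow_succ] at hw
      have hle : X ^ (m + 1) * X ≤ X ^ (m + 1) * (⊤ : Submodule k A) := mul_le_mul' le_rfl le_top
      exact hle hw
    intro v hv w hw
    have hle : Ule ρ Y (m + 1) ≤ LinearMap.ker (LinearMap.mulLeft k w) := by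
      refine sup_le (fun v hv => key v hv w hw) (Submodule.span_le.2 ?_)
      rintro _ ⟨x, v, hv, rfl⟩
      change w * ρ x v = 0
      have h1 : ρ x (w * v) = 0 := by rw [key v hv w hw, map_zero]
      have h2 := mul_eq_zero_of_mem_mul_top (ih v hv) (derivation_pow_succ_mem (ρ x) X (m + 1) w hw)
      rw [Derivation.leibniz, smul_eq_mul, smul_eq_mul, mul_comm v, h2, add_zero] at h1
      exact h1
    exact hle hv

theorem gSpan_stable (ρ : g →ₗ⁅k⁆ Derivation k A A) (Z : Submodule k A) (x : g) {a : A}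
    (ha : a ∈ gSpan ρ Z) : ρ x a ∈ gSpan ρ Z := by
  simp only [gSpan, Submodule.mem_sInf] at ha ⊢
  exact fun W hW => hW.2 x a (ha W hW)

/-- If `X`, `Y` are subspaces of `A` with `XY = 0`, and the `g`-submodule generated by `Y`
equals `U_{≤n}·Y` for some `n`, then `⟨X^{n+1}⟩ · ⟨Y⟩ = 0`, where `⟨Z⟩` is the `g`-submodule
of `A` generated by `Z`. -/
theorem gSpan_pow_mul_gSpan_eq_bot (ρ : g →ₗ⁅k⁆ Derivation k A A)
    (X Y : Submodule k A) (hXY : X * Y = ⊥) (n : ℕ) (hY : gSpan ρ Y = Ule ρ Y n) :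
    gSpan ρ (X ^ (n + 1)) * gSpan ρ Y = ⊥ := by
  -- `W` is the annihilator of `⟨Y⟩`, which is `g`-stable.
  let W : Submodule k A :=
    { carrier := {a | ∀ b ∈ gSpan ρ Y, a * b = 0}
      zero_mem' := fun b _ => zero_mul b
      add_mem' := fun {a c} ha hc b hb => by rw [add_mul, ha b hb, hc b hb, add_zero]
      smul_mem' := fun c a ha b hb => by rw [smul_mul_assoc, ha b hb, smul_zero] }
  have hle : gSpan ρ (X ^ (n + 1)) ≤ W := by
    refine sInf_le ⟨fun w hw b hb => ?_, fun x a ha b hb => ?_⟩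
    · rw [hY] at hb
      exact pow_succ_mul_Ule_eq_zero ρ X Y hXY n b hb w hw
    · have h1 : ρ x (a * b) = 0 := by rw [ha b hb, map_zero]
      rw [Derivation.leibniz, smul_eq_mul, smul_eq_mul, ha _ (gSpan_stable ρ Y x hb), zero_add,
        mul_comm] at h1
      exact h1
  rw [eq_bot_iff, Submodule.mul_le]
  exact fun a ha b hb => hle ha b hb

end
end

section
/- Let a be a G-stable ideal of A and let x_1, …, x_m ∈ rad_G(a). Then there exists N ≥ 1 such that every product of N elements of A, each of the form g•x_i for some g ∈ G and 1 ≤ i ≤ m, lies in a; equivalently, the G-stable additive subgroup X of A generated by x_1, …, x_m satisfies X^N ⊆ a. -/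
/-!
Call an ideal `c` *admissible* if it is `G`-stable and `c ^ n ≤ a` for some `n ≥ 1`, so that
`gRadical G a` is the sum of the admissible ideals. If `c ^ n ≤ a` and `d ^ k ≤ a`, then
`(c ⊔ d) ^ (n + k) ≤ c ^ n ⊔ d ^ k ≤ a`; hence admissible ideals are closed under binary sums, and
their sum is a directed union. Finitely many elements `x i` of the radical therefore lie in a single
admissible ideal `c`. By stability `c` contains every `g • x i`, hence the additive subgroup `X` that
they generate, and any `N ≥ 1` with `c ^ N ≤ a` works.
-/

open Pointwise

/-- An ideal of `A` is `G`-stable if it is preserved by the action of every `g : G`. -/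
def IsGStableIdeal (G : Type*) {A : Type*} [Group G] [CommRing A] [MulSemiringAction G A]
    (I : Ideal A) : Prop :=
  ∀ g : G, ∀ x ∈ I, g • x ∈ I

/-- The `G`-radical of a `G`-stable ideal `a`: the sum of all `G`-stable ideals `c`
with `c ^ n ⊆ a` for some `n ≥ 1`. -/
def gRadical (G : Type*) {A : Type*} [Group G] [CommRing A] [MulSemiringAction G A]
    (a : Ideal A) : Ideal A :=
  sSup {c : Ideal A | IsGStableIdeal G c ∧ ∃ n ≥ 1, c ^ n ≤ a}

/-- The `n`-fold product `X ^ n` of an additive subgroup of a ring, for `n ≥ 1`.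
(The value at `n = 0` is a junk value, never used below.) -/
def sgPow {A : Type*} [CommRing A] (X : AddSubgroup A) : ℕ → AddSubgroup A
  | 0 => ⊥
  | 1 => X
  | (n + 2) => sgPow X (n + 1) * X

/-- The `G`-stable additive subgroup of `A` generated by a set `s`. -/
def gOrbitClosure (G : Type*) {A : Type*} [Group G] [CommRing A] [MulSemiringAction G A]
    (s : Set A) : AddSubgroup A :=
  AddSubgroup.closure (⋃ g : G, (g • ·) '' s)

lemma gRadical_family_sup {G A : Type*} [Group G] [CommRing A] [MulSemiringAction G A]
    {a c d : Ideal A} (hc : IsGStableIdeal G c ∧ ∃ n ≥ 1, c ^ n ≤ a)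
    (hd : IsGStableIdeal G d ∧ ∃ n ≥ 1, d ^ n ≤ a) :
    IsGStableIdeal G (c ⊔ d) ∧ ∃ n ≥ 1, (c ⊔ d) ^ n ≤ a := by
  obtain ⟨hcG, n, hn, hcn⟩ := hc
  obtain ⟨hdG, k, hk, hdk⟩ := hd
  refine ⟨fun g y hy => ?_, n + k, by omega,
    Ideal.sup_pow_add_le_pow_sup_pow.trans (sup_le hcn hdk)⟩
  obtain ⟨u, hu, v, hv, rfl⟩ := Submodule.mem_sup.1 hy
  rw [smul_add]
  exact Submodule.add_mem_sup (hcG g u hu) (hdG g v hv)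

lemma gRadical_family_bot {G A : Type*} [Group G] [CommRing A] [MulSemiringAction G A]
    (a : Ideal A) : IsGStableIdeal G (⊥ : Ideal A) ∧ ∃ n ≥ 1, (⊥ : Ideal A) ^ n ≤ a := by
  refine ⟨fun g y hy => ?_, 1, le_rfl, by simp⟩
  rw [Ideal.mem_bot] at hy ⊢
  rw [hy, smul_zero]

/-- Finitely many elements of the `G`-radical lie in a single `G`-stable ideal that is nilpotent
modulo `a`. -/
lemma exists_ideal_of_mem_gRadical {G A ι : Type*} [Group G] [CommRing A] [MulSemiringAction G A]
    {a : Ideal A} {x : ι → A} (hx : ∀ i, x i ∈ gRadical G a) (s : Finset ι) :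
    ∃ c : Ideal A, (IsGStableIdeal G c ∧ ∃ n ≥ 1, c ^ n ≤ a) ∧ ∀ i ∈ s, x i ∈ c := by
  classical
  induction s using Finset.induction_on with
  | empty => exact ⟨⊥, gRadical_family_bot a, by simp⟩
  | insert i s _ ih =>
    obtain ⟨c, hc, hcs⟩ := ih
    obtain ⟨d, hd, hid⟩ := (Submodule.mem_sSup_of_directed ⟨⊥, gRadical_family_bot a⟩
      fun p hp q hq => ⟨p ⊔ q, gRadical_family_sup hp hq, le_sup_left, le_sup_right⟩).1 (hx i)
    refine ⟨c ⊔ d, gRadical_family_sup hc hd, fun j hj => ?_⟩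
    rcases Finset.mem_insert.1 hj with rfl | hj
    · exact Ideal.mem_sup_right hid
    · exact Ideal.mem_sup_left (hcs j hj)

lemma sgPow_le_pow {A : Type*} [CommRing A] {X : AddSubgroup A} {c : Ideal A}
    (h : X ≤ c.toAddSubgroup) (n : ℕ) : sgPow X n ≤ (c ^ n).toAddSubgroup := by
  induction n using sgPow.induct with
  | case1 => exact bot_le
  | case2 => rw [pow_one]; exact h
  | case3 n ih =>
    rw [sgPow, ← AddSubgroup.toAddSubmonoid_le, AddSubgroup.mul_toAddSubmonoid,
      AddSubmonoid.mul_le]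
    intro u hu v hv
    change u * v ∈ c ^ (n + 1 + 1)
    rw [pow_succ]
    exact Ideal.mul_mem_mul (ih hu) (h hv)

/-- If `x₁, …, xₘ` lie in the `G`-radical of a `G`-stable ideal `a`, then there is an `N ≥ 1`
such that every product of `N` elements of the form `g • xᵢ` lies in `a`; equivalently, the
`G`-stable additive subgroup `X` generated by the `xᵢ` satisfies `X ^ N ⊆ a`. -/
theorem pow_subset_of_mem_gRadical {G A : Type*} [Group G] [CommRing A] [MulSemiringAction G A]
    (a : Ideal A) (ha : IsGStableIdeal G a) (m : ℕ) (x : Fin m → A)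
    (hx : ∀ i, x i ∈ gRadical G a) :
    ∃ N ≥ 1,
      (∀ f : Fin N → A, (∀ j, ∃ (g : G) (i : Fin m), f j = g • x i) → (∏ j, f j) ∈ a) ∧
      ((sgPow (gOrbitClosure G (Set.range x)) N : AddSubgroup A) : Set A) ⊆ (a : Set A) := by
  obtain ⟨c, ⟨hcG, N, hN, hcN⟩, hxc⟩ := exists_ideal_of_mem_gRadical hx Finset.univ
  refine ⟨N, hN, fun f hf => hcN ?_, fun y hy => hcN (sgPow_le_pow ?_ N hy)⟩
  · have hfc : ∀ j ∈ Finset.univ, f j ∈ c := fun j _ => by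
      obtain ⟨g, i, hj⟩ := hf j
      rw [hj]
      exact hcG g _ (hxc i (Finset.mem_univ i))
    simpa using Ideal.prod_mem_prod (I := fun _ => c) hfc
  · rw [gOrbitClosure, AddSubgroup.closure_le]
    refine Set.iUnion_subset fun g => ?_
    rintro _ ⟨_, ⟨i, rfl⟩, rfl⟩
    exact hcG g _ (hxc i (Finset.mem_univ i))
end

section
/- Let q be a prime ideal of A in the ordinary sense. Then ⋂_{g∈G} g•q is the largest G-stable ideal of A contained in q, and it is a G-prime of A. -/
/-- A `G`-prime of `A` is a proper `G`-stable ideal `p` such that for all `G`-stable ideals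
`a`, `b`, `a * b ⊆ p` implies `a ⊆ p` or `b ⊆ p`. -/
def IsGPrime (G : Type*) {A : Type*} [Group G] [CommRing A] [MulSemiringAction G A]
    (p : Ideal A) : Prop :=
  p ≠ ⊤ ∧ IsGStableIdeal G p ∧
    ∀ a b : Ideal A, IsGStableIdeal G a → IsGStableIdeal G b → a * b ≤ p → a ≤ p ∨ b ≤ p

/-- Since `g` acts bijectively, with inverse `g⁻¹`, the ideal generated by the image of `q` under
`g` is the image itself. -/
lemma mem_map_toRingHom_iff_inv_smul_mem {G A : Type*} [Group G] [CommRing A]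
    [MulSemiringAction G A] (q : Ideal A) (g : G) (x : A) :
    x ∈ q.map (MulSemiringAction.toRingHom G A g) ↔ g⁻¹ • x ∈ q := by
  rw [Ideal.mem_map_iff_of_surjective _ (MulAction.surjective g)]
  constructor
  · rintro ⟨y, hy, rfl⟩
    simpa using hy
  · intro h
    exact ⟨g⁻¹ • x, h, smul_inv_smul g x⟩

lemma mem_iInf_map_toRingHom_iff {G A : Type*} [Group G] [CommRing A]
    [MulSemiringAction G A] (q : Ideal A) (x : A) :
    x ∈ (⨅ g : G, q.map (MulSemiringAction.toRingHom G A g)) ↔ ∀ g : G, g • x ∈ q := by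
  simp only [Ideal.mem_iInf, mem_map_toRingHom_iff_inv_smul_mem]
  exact ⟨fun h g => by simpa using h g⁻¹, fun h g => h g⁻¹⟩

/-- For an ordinary prime `q` of `A`, the intersection `⋂_{g ∈ G} g • q` is the largest
`G`-stable ideal of `A` contained in `q`, and it is a `G`-prime of `A`. -/
theorem iInf_smul_prime_isGPrime {G A : Type*} [Group G] [CommRing A] [MulSemiringAction G A]
    (q : Ideal A) (hq : q.IsPrime) :
    (IsGStableIdeal G (⨅ g : G, q.map (MulSemiringAction.toRingHom G A g)) ∧
      (⨅ g : G, q.map (MulSemiringAction.toRingHom G A g)) ≤ q ∧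
      ∀ J : Ideal A, IsGStableIdeal G J → J ≤ q →
        J ≤ ⨅ g : G, q.map (MulSemiringAction.toRingHom G A g)) ∧
    IsGPrime G (⨅ g : G, q.map (MulSemiringAction.toRingHom G A g)) := by
  have hstable : IsGStableIdeal G (⨅ g : G, q.map (MulSemiringAction.toRingHom G A g)) := by
    intro g x hx
    rw [mem_iInf_map_toRingHom_iff] at hx ⊢
    intro h
    rw [smul_smul]
    exact hx (h * g)
  have hle : (⨅ g : G, q.map (MulSemiringAction.toRingHom G A g)) ≤ q := by
    intro x hx
    simpa using (mem_iInf_map_toRingHom_iff q x).1 hx 1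
  have hmax : ∀ J : Ideal A, IsGStableIdeal G J → J ≤ q →
      J ≤ ⨅ g : G, q.map (MulSemiringAction.toRingHom G A g) := fun J hJ hJq x hx =>
    (mem_iInf_map_toRingHom_iff q x).2 fun g => hJq (hJ g x hx)
  refine ⟨⟨hstable, hle, hmax⟩, fun htop => hq.ne_top (top_le_iff.1 (htop ▸ hle)), hstable, ?_⟩
  intro a b ha hb hab
  exact (hq.mul_le.1 (hab.trans hle)).imp (hmax a ha) (hmax b hb)
end

section
/- Let G be a group. The following are equivalent: (A) for every commutative ring A with an action of G by ring automorphisms and all G-stable ideals a, b of A, rad_G(a) ⊆ rad_G(b) if and only if rad(a) ⊆ rad(b); (A1) for every such A and every G-stable additive subgroup X of A, X ⊆ rad_G((0)) if and only if every element of X is nilpotent; (A2) for every such A, rad_G((0)) equals the nilradical of A. -/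
universe u v

/-- Property (A) for a group `G` (over commutative rings in universe `u`). -/
def PropA (G : Type v) [Group G] : Prop :=
  ∀ (A : Type u) [CommRing A] [MulSemiringAction G A], ∀ a b : Ideal A,
    IsGStableIdeal G a → IsGStableIdeal G b →
      (gRadical G a ≤ gRadical G b ↔ a.radical ≤ b.radical)

/-- Property (A1) for a group `G`: a `G`-stable additive subgroup consists of nilpotents
iff it is contained in the `G`-radical of the zero ideal. -/
def PropA1 (G : Type v) [Group G] : Prop :=
  ∀ (A : Type u) [CommRing A] [MulSemiringAction G A], ∀ X : AddSubgroup A,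
    (∀ g : G, ∀ x ∈ X, g • x ∈ X) →
      ((X : Set A) ⊆ (gRadical G (⊥ : Ideal A) : Set A) ↔ ∀ x ∈ X, IsNilpotent x)

/-- Property (A2) for a group `G`: the `G`-radical of the zero ideal is the nilradical. -/
def PropA2 (G : Type v) [Group G] : Prop :=
  ∀ (A : Type u) [CommRing A] [MulSemiringAction G A],
    gRadical G (⊥ : Ideal A) = nilradical A

section GRadicalLemmas

variable {G A : Type*} [Group G] [CommRing A] [MulSemiringAction G A]

theorem le_gRadical {a : Ideal A} (ha : IsGStableIdeal G a) : a ≤ gRadical G a :=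
  le_sSup ⟨ha, 1, le_rfl, (pow_one a).le⟩

theorem gRadical_le_radical (a : Ideal A) : gRadical G a ≤ a.radical := by
  refine sSup_le ?_
  rintro c ⟨-, n, -, hn⟩ x hx
  exact ⟨n, hn (Ideal.pow_mem_pow hx n)⟩

theorem gRadical_bot_le_nilradical : gRadical G (⊥ : Ideal A) ≤ nilradical A :=
  gRadical_le_radical ⊥

theorem smul_mem_nilradical (g : G) {x : A} (hx : x ∈ nilradical A) :
    g • x ∈ nilradical A := by
  rw [mem_nilradical] at hx ⊢
  exact hx.map (MulSemiringAction.toRingHom G A g)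

/-- The action induced on `A ⧸ a` by a `G`-stable ideal `a`. -/
abbrev quotientAction (a : Ideal A) (ha : IsGStableIdeal G a) :
    MulSemiringAction G (A ⧸ a) where
  smul g := Ideal.quotientMap a (MulSemiringAction.toRingHom G A g) (fun x hx => ha g x hx)
  one_smul y := by
    obtain ⟨x, rfl⟩ := Ideal.Quotient.mk_surjective y
    exact congrArg (Ideal.Quotient.mk a) (one_smul G x)
  mul_smul g h y := by
    obtain ⟨x, rfl⟩ := Ideal.Quotient.mk_surjective y
    exact congrArg (Ideal.Quotient.mk a) (mul_smul g h x)
  smul_zero g := map_zero (Ideal.quotientMap a _ _)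
  smul_add g := map_add (Ideal.quotientMap a _ _)
  smul_one g := map_one (Ideal.quotientMap a _ _)
  smul_mul g := map_mul (Ideal.quotientMap a _ _)

/-- The zero ideal of `A ⧸ a` has `G`-radical contained in the image of `rad_G(a)`: a nilpotent
`G`-stable ideal of the quotient pulls back to a `G`-stable ideal with a power inside `a`. -/
theorem gRadical_bot_quotient_le (a : Ideal A) (ha : IsGStableIdeal G a) :
    letI := quotientAction a ha
    gRadical G (⊥ : Ideal (A ⧸ a)) ≤ (gRadical G a).map (Ideal.Quotient.mk a) := by
  let _ := quotientAction a ha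
  refine sSup_le ?_
  rintro c ⟨hc, n, hn1, hn⟩
  rw [← Ideal.map_comap_of_surjective _ Ideal.Quotient.mk_surjective c]
  refine Ideal.map_mono (le_sSup ⟨fun g x hx => hc g _ hx, n, hn1, ?_⟩)
  refine le_trans ?_ (Ideal.mk_ker (I := a)).le
  rw [RingHom.ker_eq_comap_bot, ← Ideal.map_le_iff_le_comap,
    Ideal.map_pow, Ideal.map_comap_of_surjective _ Ideal.Quotient.mk_surjective]
  exact hn

end GRadicalLemmas

/-- Property (A2), applied to `A ⧸ a`, identifies the `G`-radical of every `G`-stable ideal `a`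
with its radical. -/
theorem PropA2.gRadical_eq_radical {G : Type v} [Group G] (h : PropA2.{u} G) {A : Type u}
    [CommRing A] [MulSemiringAction G A] {a : Ideal A} (ha : IsGStableIdeal G a) :
    gRadical G a = a.radical := by
  refine le_antisymm (gRadical_le_radical a) ?_
  rintro x ⟨n, hn⟩
  let _ := quotientAction a ha
  have hx : Ideal.Quotient.mk a x ∈ nilradical (A ⧸ a) :=
    ⟨n, by simpa [← map_pow] using Ideal.Quotient.eq_zero_iff_mem.mpr hn⟩
  rw [← h (A ⧸ a)] at hx
  have hx' := gRadical_bot_quotient_le a ha hx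
  rw [Ideal.mem_quotient_iff_mem (le_gRadical ha)] at hx'
  exact hx'

theorem PropA2.propA {G : Type v} [Group G] (h : PropA2.{u} G) : PropA.{u} G := by
  intro A _ _ a b ha hb
  rw [h.gRadical_eq_radical ha, h.gRadical_eq_radical hb]

/-- Property (A) is applied to the nilradical and the zero ideal, which have the same radical. -/
theorem PropA.propA2 {G : Type v} [Group G] (h : PropA.{u} G) : PropA2.{u} G := by
  intro A _ _
  refine le_antisymm gRadical_bot_le_nilradical ?_
  have hN : IsGStableIdeal G (nilradical A) := fun g _ hx => smul_mem_nilradical g hx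
  have hbot : IsGStableIdeal G (⊥ : Ideal A) := by
    rintro g x rfl
    exact smul_zero g
  exact (le_gRadical hN).trans
    ((h A (nilradical A) ⊥ hN hbot).mpr (Ideal.radical_idem (⊥ : Ideal A)).le)

theorem PropA2.propA1 {G : Type v} [Group G] (h : PropA2.{u} G) : PropA1.{u} G := by
  intro A _ _ X _
  rw [h A]
  rfl

theorem PropA1.propA2 {G : Type v} [Group G] (h : PropA1.{u} G) : PropA2.{u} G := by
  intro A _ _
  refine le_antisymm gRadical_bot_le_nilradical ?_
  exact (h A (nilradical A).toAddSubgroup fun g _ hx => smul_mem_nilradical g hx).mpr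
    fun _ hx => hx

/-- The properties (A), (A1) and (A2) are equivalent. -/
theorem propA_iff_propA1_iff_propA2 (G : Type v) [Group G] :
    (PropA.{u} G ↔ PropA1.{u} G) ∧ (PropA1.{u} G ↔ PropA2.{u} G) := by
  exact ⟨⟨fun h => h.propA2.propA1, fun h => h.propA2.propA⟩,
    ⟨PropA1.propA2, PropA2.propA1⟩⟩
end

section
/- Let h be a Lie subalgebra of g. Assume that for every finite-dimensional k-subspace X of A there exists a Lie subalgebra p of g with g = p + h (as k-subspaces of g) such that the p-submodule of A generated by X is finite-dimensional. Let b be an h-stable ideal of A and let a be the largest g-stable ideal of A contained in b (the sum of all g-stable ideals of A contained in b). Then the largest g-stable subspace of A contained in rad(b) equals the largest g-stable subspace of A contained in rad(a); equivalently, every g-stable subspace of A contained in rad(b) is contained in rad(a). Here rad denotes the ordinary radical of an ideal. -/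
/-!
Given a `g`-stable `V ⊆ rad b` and `v ∈ V`, choose `p` with `g = p + h` so that the `p`-module `X`
generated by `v` is finite dimensional. Then `X ⊆ V ⊆ rad b`, and since `X` is spanned by finitely
many elements, `X ^ n ⊆ b` for some `n`. The subspace `X ^ n` is `p`-stable by the Leibniz rule.

The main point is that for a `p`-stable subspace `W` the `h`-module generated by `W` is already
`g`-stable (`pSpan_gStable`), an elementary form of `U(g) W = U(h) U(p) W = U(h) W`. Applied to
`W = X ^ n`, it yields a `g`-stable subspace inside the `h`-stable ideal `b`; the ideal it
generates is `g`-stable, lies in `b`, hence in `a`, and contains `v ^ n`.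
-/

section

variable {k : Type*} [Field k] {g : Type*} [LieRing g] [LieAlgebra k g]
  {A : Type*} [CommRing A] [Algebra k A]

/-- The `p`-submodule of `A` generated by a subspace `Z`, for a Lie subalgebra `p` of `g`:
the smallest subspace of `A` containing `Z` stable under `ρ(x)` for all `x ∈ p`. -/
def pSpan (ρ : g →ₗ⁅k⁆ Derivation k A A) (p : LieSubalgebra k g) (Z : Submodule k A) :
    Submodule k A :=
  sInf {W : Submodule k A | Z ≤ W ∧ ∀ x ∈ p, ∀ a ∈ W, ρ x a ∈ W}

lemma le_pSpan (ρ : g →ₗ⁅k⁆ Derivation k A A) (p : LieSubalgebra k g) (Z : Submodule k A) :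
    Z ≤ pSpan ρ p Z :=
  le_sInf fun _ hW => hW.1

lemma pSpan_le (ρ : g →ₗ⁅k⁆ Derivation k A A) (p : LieSubalgebra k g) {Z W : Submodule k A}
    (hZ : Z ≤ W) (hW : ∀ x ∈ p, ∀ a ∈ W, ρ x a ∈ W) : pSpan ρ p Z ≤ W :=
  sInf_le ⟨hZ, hW⟩

lemma pSpan_stable (ρ : g →ₗ⁅k⁆ Derivation k A A) (p : LieSubalgebra k g) (Z : Submodule k A) :
    ∀ x ∈ p, ∀ a ∈ pSpan ρ p Z, ρ x a ∈ pSpan ρ p Z := by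
  intro x hx a ha
  refine (Submodule.mem_sInf).2 fun W hW => hW.2 x hx a ?_
  exact (Submodule.mem_sInf).1 ha W hW

/-- If `g = p + h` and `W` is `p`-stable, the `h`-module `M` generated by `W` is `g`-stable:
the elements of `M` that all of `g` sends into `M` form an `h`-stable subspace containing `W`. -/
lemma pSpan_gStable (ρ : g →ₗ⁅k⁆ Derivation k A A) (p h : LieSubalgebra k g)
    (hph : p.toSubmodule ⊔ h.toSubmodule = ⊤) (W : Submodule k A)
    (hW : ∀ x ∈ p, ∀ a ∈ W, ρ x a ∈ W) :
    ∀ x : g, ∀ a ∈ pSpan ρ h W, ρ x a ∈ pSpan ρ h W := by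
  let M := pSpan ρ h W
  let N : Submodule k A :=
    { carrier := {m | m ∈ M ∧ ∀ x : g, ρ x m ∈ M}
      add_mem' := fun {u v} hu hv => ⟨M.add_mem hu.1 hv.1, fun x => by
        rw [map_add]; exact M.add_mem (hu.2 x) (hv.2 x)⟩
      zero_mem' := ⟨M.zero_mem, fun x => by rw [map_zero]; exact M.zero_mem⟩
      smul_mem' := fun c u hu => ⟨M.smul_mem c hu.1, fun x => by
        rw [Derivation.map_smul]; exact M.smul_mem c (hu.2 x)⟩ }
  have hMN : M ≤ N := by
    refine pSpan_le ρ h ?_ ?_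
    · intro w hw
      refine ⟨le_pSpan ρ h W hw, fun x => ?_⟩
      have hx : x ∈ p.toSubmodule ⊔ h.toSubmodule := hph ▸ Submodule.mem_top
      obtain ⟨y, hy, z, hz, rfl⟩ := Submodule.mem_sup.1 hx
      rw [map_add, Derivation.add_apply]
      exact M.add_mem (le_pSpan ρ h W (hW y hy w hw))
        (pSpan_stable ρ h W z hz w (le_pSpan ρ h W hw))
    · rintro y hy m ⟨hm, hm'⟩
      refine ⟨hm' y, fun x => ?_⟩
      have e : ρ x (ρ y m) = ρ ⁅x, y⁆ m + ρ y (ρ x m) := by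
        rw [LieHom.map_lie, Derivation.commutator_apply]; ring
      rw [e]
      exact M.add_mem (hm' _) (pSpan_stable ρ h W y hy _ (hm' x))
  exact fun x m hm => (hMN hm).2 x

lemma pow_stable (D : Derivation k A A) (X : Submodule k A) (hX : ∀ a ∈ X, D a ∈ X) (n : ℕ) :
    ∀ a ∈ X ^ n, D a ∈ X ^ n := by
  induction n with
  | zero =>
    intro a ha
    rw [pow_zero] at ha ⊢
    obtain ⟨c, rfl⟩ := Submodule.mem_one.1 ha
    rw [Derivation.map_algebraMap]
    exact Submodule.zero_mem _
  | succ n ih =>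
    intro a ha
    rw [pow_succ] at ha ⊢
    refine Submodule.mul_induction_on ha (fun u hu v hv => ?_) (fun u v hu hv => ?_)
    · rw [Derivation.leibniz, smul_eq_mul, smul_eq_mul, mul_comm v]
      exact Submodule.add_mem _ (Submodule.mul_mem_mul hu (hX v hv))
        (Submodule.mul_mem_mul (ih u hu) hv)
    · rw [map_add]
      exact Submodule.add_mem _ hu hv

lemma idealSpan_stable (D : Derivation k A A) (M : Submodule k A) (hM : ∀ a ∈ M, D a ∈ M) :
    ∀ a ∈ Ideal.span (M : Set A), D a ∈ Ideal.span (M : Set A) := by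
  intro a ha
  induction ha using Submodule.span_induction with
  | mem x hx => exact Ideal.subset_span (hM x hx)
  | zero => rw [map_zero]; exact Ideal.zero_mem _
  | add x y _ _ hx hy => rw [map_add]; exact Ideal.add_mem _ hx hy
  | smul c x hx hx' =>
    rw [smul_eq_mul, Derivation.leibniz, smul_eq_mul, smul_eq_mul]
    exact Ideal.add_mem _ (Ideal.mul_mem_left _ _ hx') (Ideal.mul_mem_right _ _ hx)

/-- A finite-dimensional subspace of `rad b` has a power contained in `b`. -/
lemma exists_pow_le (X : Submodule k A) [FiniteDimensional k X] (b : Ideal A)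
    (hX : (X : Set A) ⊆ (b.radical : Set A)) :
    ∃ n : ℕ, X ^ n ≤ b.restrictScalars k := by
  obtain ⟨s, hs⟩ := (Submodule.fg_iff_finiteDimensional X).2 inferInstance
  have hfg : (Ideal.span (s : Set A)).FG := ⟨s, rfl⟩
  have hle : Ideal.span (s : Set A) ≤ b.radical :=
    Ideal.span_le.2 fun x hx => hX (hs ▸ Submodule.subset_span hx)
  obtain ⟨n, hn⟩ := Ideal.exists_pow_le_of_le_radical_of_fg hle hfg
  refine ⟨n, fun x hx => hn ?_⟩
  rw [← hs, Submodule.span_pow] at hx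
  rw [Ideal.span, Submodule.span_pow]
  exact Submodule.span_le_restrictScalars k A _ hx

/-- Suppose every finite-dimensional subspace of `A` has an "approximate stabilizer":
a Lie subalgebra `p` of `g` with `g = p + h` such that the `p`-submodule generated by the
subspace is finite dimensional.  Let `b` be an `h`-stable ideal and `a` the largest
`g`-stable ideal contained in `b`.  Then the largest `g`-stable subspace of `A` contained in
`rad(b)` equals the largest `g`-stable subspace contained in `rad(a)`; equivalently, every
`g`-stable subspace of `A` contained in `rad(b)` is contained in `rad(a)`. -/
theorem gStable_floor_radical_eq (ρ : g →ₗ⁅k⁆ Derivation k A A) (h : LieSubalgebra k g)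
    (hStab : ∀ X : Submodule k A, FiniteDimensional k X →
      ∃ p : LieSubalgebra k g, p.toSubmodule ⊔ h.toSubmodule = ⊤ ∧
        FiniteDimensional k (pSpan ρ p X))
    (b : Ideal A) (hb : ∀ x ∈ h, ∀ v ∈ b, ρ x v ∈ b)
    (a : Ideal A)
    (ha : a = sSup {c : Ideal A | (∀ x : g, ∀ v ∈ c, ρ x v ∈ c) ∧ c ≤ b}) :
    sSup {W : Submodule k A | (∀ x : g, ∀ v ∈ W, ρ x v ∈ W) ∧
        (W : Set A) ⊆ (b.radical : Set A)} =
      sSup {W : Submodule k A | (∀ x : g, ∀ v ∈ W, ρ x v ∈ W) ∧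
        (W : Set A) ⊆ (a.radical : Set A)} ∧
    ∀ V : Submodule k A, (∀ x : g, ∀ v ∈ V, ρ x v ∈ V) →
      (V : Set A) ⊆ (b.radical : Set A) → (V : Set A) ⊆ (a.radical : Set A) := by
  have key : ∀ V : Submodule k A, (∀ x : g, ∀ v ∈ V, ρ x v ∈ V) →
      (V : Set A) ⊆ (b.radical : Set A) → (V : Set A) ⊆ (a.radical : Set A) := by
    intro V hV hVb v hv
    obtain ⟨p, hph, hfin⟩ := hStab (Submodule.span k {v}) inferInstance
    have hXV : pSpan ρ p (Submodule.span k {v}) ≤ V :=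
      pSpan_le ρ p ((Submodule.span_singleton_le_iff_mem _ _).2 hv) fun x _ => hV x
    have hXs := pSpan_stable ρ p (Submodule.span k {v})
    have hvX : v ∈ pSpan ρ p (Submodule.span k {v}) :=
      le_pSpan ρ p _ (Submodule.mem_span_singleton_self v)
    generalize pSpan ρ p (Submodule.span k {v}) = X at *
    obtain ⟨n, hn⟩ := exists_pow_le X b fun x hx => hVb (hXV hx)
    have hMg := pSpan_gStable ρ p h hph (X ^ n) fun x hx => pow_stable (ρ x) X (hXs x hx) n
    have hMb : pSpan ρ h (X ^ n) ≤ b.restrictScalars k := pSpan_le ρ h hn hb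
    have hca : Ideal.span (pSpan ρ h (X ^ n) : Set A) ≤ a := by
      rw [ha]
      exact le_sSup ⟨fun x => idealSpan_stable (ρ x) _ (hMg x), Ideal.span_le.2 hMb⟩
    exact ⟨n, hca (Ideal.subset_span (le_pSpan ρ h _ (Submodule.pow_mem_pow X hvX n)))⟩
  have hab : a ≤ b := by
    rw [ha]
    exact sSup_le fun c hc => hc.2
  refine ⟨le_antisymm ?_ ?_, key⟩
  · exact sSup_le_sSup fun W hW => ⟨hW.1, key W hW.1 hW.2⟩
  · exact sSup_le_sSup fun W hW => ⟨hW.1, hW.2.trans (Ideal.radical_mono hab)⟩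

end
end

section
/- Let a be a G-stable ideal of A. Suppose that rad_G(a) equals the largest G-stable ideal of A contained in rad(a) (i.e., the sum of all G-stable ideals of A contained in rad(a)), and that rad(a) is a prime ideal. Then rad_G(a) is a G-prime of A. -/
theorem isGStableIdeal_sSup {G A : Type*} [Group G] [CommRing A] [MulSemiringAction G A]
    (S : Set (Ideal A)) (hS : ∀ c ∈ S, IsGStableIdeal G c) : IsGStableIdeal G (sSup S) := by
  intro g
  -- Stability under `g` says that each ideal lies in its preimage under the ring map `g • ·`.
  have h : sSup S ≤ (sSup S).comap (MulSemiringAction.toRingHom G A g) :=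
    sSup_le fun c hc x hx => le_sSup hc (hS c hc g x hx)
  exact fun x hx => h hx

/-- If the `G`-radical of a `G`-stable ideal `a` is the largest `G`-stable ideal contained in
the ordinary radical of `a`, and the ordinary radical of `a` is prime, then the `G`-radical of
`a` is `G`-prime. -/
theorem gRadical_isGPrime_of_radical_isPrime
    {G A : Type*} [Group G] [CommRing A] [MulSemiringAction G A]
    (a : Ideal A) (ha : IsGStableIdeal G a)
    (h1 : gRadical G a = sSup {c : Ideal A | IsGStableIdeal G c ∧ c ≤ a.radical})
    (h2 : a.radical.IsPrime) :
    IsGPrime G (gRadical G a) := by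
  have hle : gRadical G a ≤ a.radical := h1 ▸ sSup_le fun c hc => hc.2
  have hmax : ∀ c : Ideal A, IsGStableIdeal G c → c ≤ a.radical → c ≤ gRadical G a :=
    fun c hc hca => h1 ▸ le_sSup ⟨hc, hca⟩
  refine ⟨fun h => h2.ne_top (top_le_iff.mp (h ▸ hle)),
    isGStableIdeal_sSup _ fun c hc => hc.1, fun b c hb hc hbc => ?_⟩
  exact (h2.mul_le.mp (hbc.trans hle)).imp (hmax b hb) (hmax c hc)
end

section
/- Let H be a subgroup of G. Suppose that every G-stable additive subgroup of A generated by the G-orbits of finitely many elements is, as an H-stable additive subgroup, generated by the H-orbits of finitely many elements. Then for every G-stable ideal a of A and every G-stable additive subgroup X of A, X ⊆ rad_H(a) implies X ⊆ rad_G(a), where rad_H(a) denotes the sum of all H-stable ideals c of A with c^n ⊆ a for some n ≥ 1. -/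
/-- The `H`-radical, for a subgroup `H` of `G`: the sum of all `H`-stable ideals `c`
with `c ^ n ⊆ a` for some `n ≥ 1`. -/
def hRadical {G : Type*} [Group G] (H : Subgroup G) {A : Type*} [CommRing A]
    [MulSemiringAction G A] (a : Ideal A) : Ideal A :=
  sSup {c : Ideal A | (∀ h : H, ∀ x ∈ c, (h : G) • x ∈ c) ∧ ∃ n ≥ 1, c ^ n ≤ a}

/-- The ideals summed in `rad_H(a)` form a directed family, since
`(c ⊔ d) ^ (m + n) ≤ c ^ m ⊔ d ^ n`; hence finitely many elements of `rad_H(a)` lie in one of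
them. -/
lemma exists_hStable_of_finset {G A : Type*} [Group G] [CommRing A] [MulSemiringAction G A]
    (H : Subgroup G) (a : Ideal A) (T : Finset A) (hT : ∀ t ∈ T, t ∈ hRadical H a) :
    ∃ c : Ideal A, ((∀ h : H, ∀ x ∈ c, (h : G) • x ∈ c) ∧ ∃ n ≥ 1, c ^ n ≤ a) ∧
      ∀ t ∈ T, t ∈ c := by
  classical
  have hbot : (⊥ : Ideal A) ∈
      {c : Ideal A | (∀ h : H, ∀ x ∈ c, (h : G) • x ∈ c) ∧ ∃ n ≥ 1, c ^ n ≤ a} := by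
    refine ⟨fun h x hx => ?_, 1, le_rfl, by simp⟩
    rw [Ideal.mem_bot] at hx ⊢
    rw [hx, smul_zero]
  have hsup : ∀ c d : Ideal A,
      ((∀ h : H, ∀ x ∈ c, (h : G) • x ∈ c) ∧ ∃ n ≥ 1, c ^ n ≤ a) →
      ((∀ h : H, ∀ x ∈ d, (h : G) • x ∈ d) ∧ ∃ n ≥ 1, d ^ n ≤ a) →
      ((∀ h : H, ∀ x ∈ c ⊔ d, (h : G) • x ∈ c ⊔ d) ∧ ∃ n ≥ 1, (c ⊔ d) ^ n ≤ a) := by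
    rintro c d ⟨hc, m, hm, hcm⟩ ⟨hd, n, hn, hdn⟩
    refine ⟨fun h x hx => ?_, m + n, by omega,
      Ideal.sup_pow_add_le_pow_sup_pow.trans (sup_le hcm hdn)⟩
    obtain ⟨y, hy, z, hz, rfl⟩ := Submodule.mem_sup.1 hx
    rw [smul_add]
    exact Submodule.add_mem_sup (hc h y hy) (hd h z hz)
  induction T using Finset.induction_on with
  | empty => exact ⟨⊥, hbot, by simp⟩
  | insert t T _ ih =>
    obtain ⟨c, hc, hcT⟩ := ih fun s hs => hT s (Finset.mem_insert_of_mem hs)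
    have ht := hT t (Finset.mem_insert_self t T)
    rw [hRadical, Submodule.mem_sSup_of_directed ⟨⊥, hbot⟩
      (fun c hc d hd => ⟨c ⊔ d, hsup c d hc hd, le_sup_left, le_sup_right⟩)] at ht
    obtain ⟨d, hd, htd⟩ := ht
    refine ⟨c ⊔ d, hsup c d hc hd, fun s hs => ?_⟩
    rcases Finset.mem_insert.1 hs with rfl | hs
    · exact Ideal.mem_sup_right htd
    · exact Ideal.mem_sup_left (hcT s hs)

/-- Suppose every `G`-stable additive subgroup of `A` generated by the `G`-orbits of finitely
many elements is, as an `H`-stable additive subgroup, generated by the `H`-orbits of finitely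
many elements.  Then for every `G`-stable ideal `a`, any `G`-stable additive subgroup contained
in `rad_H(a)` is contained in `rad_G(a)`. -/
theorem gStable_le_gRadical_of_le_hRadical
    {G A : Type*} [Group G] [CommRing A] [MulSemiringAction G A] (H : Subgroup G)
    (hfin : ∀ S : Finset A, ∃ T : Finset A,
      AddSubgroup.closure (⋃ g : G, (g • ·) '' (S : Set A)) =
        AddSubgroup.closure (⋃ h : H, ((h : G) • ·) '' (T : Set A)))
    (a : Ideal A) (ha : IsGStableIdeal G a)
    (X : AddSubgroup A) (hX : ∀ g : G, ∀ x ∈ X, g • x ∈ X)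
    (hXrad : (X : Set A) ⊆ (hRadical H a : Set A)) :
    (X : Set A) ⊆ (gRadical G a : Set A) := by
  intro x hx
  obtain ⟨T, hT⟩ := hfin {x}
  have hTX : ∀ t ∈ T, t ∈ X := by
    intro t ht
    have h1 : t ∈ AddSubgroup.closure (⋃ h : H, ((h : G) • ·) '' (T : Set A)) :=
      AddSubgroup.subset_closure (Set.mem_iUnion.2 ⟨1, t, ht, by simp⟩)
    rw [← hT] at h1
    refine (AddSubgroup.closure_le X).2 ?_ h1
    refine Set.iUnion_subset fun g => ?_
    rintro _ ⟨y, hy, rfl⟩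
    obtain rfl : y = x := by simpa using hy
    exact hX g y hx
  obtain ⟨c, ⟨hcH, n, hn, hcn⟩, hTc⟩ :=
    exists_hStable_of_finset H a T fun t ht => hXrad (hTX t ht)
  have horb : ∀ g : G, g • x ∈ c := by
    intro g
    have h1 : g • x ∈ AddSubgroup.closure (⋃ g : G, (g • ·) '' ((({x} : Finset A)) : Set A)) :=
      AddSubgroup.subset_closure (Set.mem_iUnion.2 ⟨g, x, by simp, rfl⟩)
    rw [hT] at h1
    refine (AddSubgroup.closure_le c.toAddSubgroup).2 ?_ h1
    refine Set.iUnion_subset fun h => ?_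
    rintro _ ⟨t, ht, rfl⟩
    exact hcH h t (hTc t ht)
  have hspan : Ideal.span (Set.range fun g : G => g • x) ≤ c := by
    rw [Ideal.span_le]
    rintro _ ⟨g, rfl⟩
    exact horb g
  have hstable : IsGStableIdeal G (Ideal.span (Set.range fun g : G => g • x)) := by
    intro g y hy
    induction hy using Submodule.span_induction with
    | mem y hy =>
      obtain ⟨k, rfl⟩ := hy
      exact Ideal.subset_span ⟨g * k, mul_smul g k x⟩
    | zero => rw [smul_zero]; exact Ideal.zero_mem _
    | add y z _ _ hy hz => rw [smul_add]; exact Ideal.add_mem _ hy hz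
    | smul r y _ hy =>
      rw [smul_eq_mul, smul_mul']
      exact Ideal.mul_mem_left _ _ hy
  have hle : Ideal.span (Set.range fun g : G => g • x) ≤ gRadical G a :=
    le_sSup ⟨hstable, n, hn, (Ideal.pow_right_mono hspan n).trans hcn⟩
  exact hle (Ideal.subset_span ⟨1, one_smul G x⟩)
end
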